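/- Suppose the coordinates u are normalized, B(u) satisfies the matching condition, and α = min{α_i : i ∈ J} < ∞. Then there exists a constant C > 0, depending only on the system, such that for any C^1 solution u = u(t,x) with |u| small, the source term G_i of the characteristic-form decomposition of w_i satisfies, for each i = 1,…,n: |G_i(t,x)| ≤ C [ Σ_{j≠k} ( |w_j w_k| + |v_j w_k| ) + Σ_{j≠i} |v_j| w_i² + |u_i|^α w_i² ]. -/

import Mathlib

open scoped ENNReal
open MeasureTheory Matrix Set Filter Topology

noncomputable section

/-- The state space `ℝⁿ`, realized as `Fin n → ℝ`. -/
abbrev V (n : ℕ) := Fin n → ℝ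

/-- The Euclidean norm on `Fin n → ℝ`. -/
def eunorm {n : ℕ} (v : V n) : ℝ := Real.sqrt (∑ i, v i ^ 2)

/-- The `i`-th standard basis vector `e_i`. -/
def eb {n : ℕ} (i : Fin n) : V n := Pi.single i 1

/-- A first-order quasilinear strictly hyperbolic system
`∂u/∂t + A(u) ∂u/∂x = B(u)`, with suitably smooth coefficients on the
neighborhood `{|u| < δ}` of `u = 0`, real distinct eigenvalues
`λ_1(u) < ⋯ < λ_n(u)` and complete systems of left/right eigenvectors
normalized by `l_i(u) r_j(u) ≡ δ_ij`, `r_i(u)ᵀ r_i(u) ≡ 1`. -/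
structure HypSys (n : ℕ) where
  A : V n → Matrix (Fin n) (Fin n) ℝ
  B : V n → V n
  lam : Fin n → V n → ℝ
  l : Fin n → V n → V n
  r : Fin n → V n → V n
  δ : ℝ
  δ_pos : 0 < δ
  smooth_A : ∀ i j : Fin n, ContDiffOn ℝ (⊤ : ℕ∞) (fun u => A u i j) {u | eunorm u < δ}
  smooth_B : ContDiffOn ℝ (⊤ : ℕ∞) B {u | eunorm u < δ}
  smooth_lam : ∀ i : Fin n, ContDiffOn ℝ (⊤ : ℕ∞) (lam i) {u | eunorm u < δ}
  smooth_l : ∀ i : Fin n, ContDiffOn ℝ (⊤ : ℕ∞) (l i) {u | eunorm u < δ}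
  smooth_r : ∀ i : Fin n, ContDiffOn ℝ (⊤ : ℕ∞) (r i) {u | eunorm u < δ}
  strict_hyp : ∀ u : V n, eunorm u < δ → ∀ i j : Fin n, i < j → lam i u < lam j u
  eig_r : ∀ u : V n, eunorm u < δ → ∀ i, Matrix.mulVec (A u) (r i u) = lam i u • r i u
  eig_l : ∀ u : V n, eunorm u < δ → ∀ i, Matrix.vecMul (l i u) (A u) = lam i u • l i u
  norm_lr : ∀ u : V n, eunorm u < δ → ∀ i j : Fin n, l i u ⬝ᵥ r j u = if i = j then 1 else 0
  norm_rr : ∀ u : V n, eunorm u < δ → ∀ i : Fin n, r i u ⬝ᵥ r i u = 1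

namespace HypSys

variable {n : ℕ} (S : HypSys n)

/-- Normalized coordinates: `r_i(u_i e_i) ≡ e_i` for `|u_i|` small. -/
def Normalized : Prop := ∀ i : Fin n, ∀ s : ℝ, |s| < S.δ → S.r i (s • eb i) = eb i

/-- Matching condition for the inhomogeneous term: `B(u_i e_i) ≡ 0` for `|u_i|` small. -/
def Matching : Prop := ∀ i : Fin n, ∀ s : ℝ, |s| < S.δ → S.B (s • eb i) = 0

/-- In normalized coordinates, `∂^k λ_i / ∂u_i^k (0)`. -/
def axisDeriv (i : Fin n) (k : ℕ) : ℝ := iteratedDeriv k (fun s : ℝ => S.lam i (s • eb i)) 0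

/-- The `i`-th characteristic field is weakly linearly degenerate:
`λ_i(u_i e_i) ≡ λ_i(0)` for `|u_i|` small (in normalized coordinates). -/
def WLD (i : Fin n) : Prop := ∀ s : ℝ, |s| < S.δ → S.lam i (s • eb i) = S.lam i 0

/-- `α_i = a`: the derivatives `∂^k λ_i/∂u_i^k (0)` vanish for `k = 1, …, a`
but not for `k = a + 1`. -/
def IsAlphaOf (i : Fin n) (a : ℕ) : Prop :=
  (∀ k : ℕ, 1 ≤ k → k ≤ a → S.axisDeriv i k = 0) ∧ S.axisDeriv i (a + 1) ≠ 0

/-- `a = α = min { α_i : i ∈ J } < ∞`, where `J` is the set of non weakly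
linearly degenerate indices.  (In particular the system is not weakly
linearly degenerate.) -/
def IsMinAlpha (a : ℕ) : Prop :=
  (∃ i : Fin n, ¬ S.WLD i ∧ S.IsAlphaOf i a) ∧
    ∀ i : Fin n, ¬ S.WLD i → ∀ b : ℕ, S.IsAlphaOf i b → a ≤ b

/-- `b_i(u) = l_i(u) B(u)`. -/
def bcoef (i : Fin n) (u : V n) : ℝ := S.l i u ⬝ᵥ S.B u

/-- `β_{ijk}(u) = (λ_k(u) − λ_i(u)) l_i(u) ∇r_j(u) r_k(u)`. -/
def beta (i j k : Fin n) (u : V n) : ℝ :=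
  (S.lam k u - S.lam i u) * (S.l i u ⬝ᵥ fderiv ℝ (S.r j) u (S.r k u))

/-- `ν_{ijk}(u) = − l_i(u) ∇r_j(u) r_k(u)`. -/
def nu (i j k : Fin n) (u : V n) : ℝ := -(S.l i u ⬝ᵥ fderiv ℝ (S.r j) u (S.r k u))

/-- `γ_{ijk}(u) = (λ_k(u) − λ_j(u)) l_i(u) ∇r_j(u) r_k(u) − ∇λ_j(u) r_k(u) δ_ij`. -/
def gamma (i j k : Fin n) (u : V n) : ℝ :=
  (S.lam k u - S.lam j u) * (S.l i u ⬝ᵥ fderiv ℝ (S.r j) u (S.r k u)) -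
    (if i = j then fderiv ℝ (S.lam j) u (S.r k u) else 0)

/-- `σ_{ijk}(u) = l_i(u) (∇r_k(u) r_j(u) − ∇r_j(u) r_k(u))`. -/
def sigma (i j k : Fin n) (u : V n) : ℝ :=
  S.l i u ⬝ᵥ (fderiv ℝ (S.r k) u (S.r j u) - fderiv ℝ (S.r j) u (S.r k u))

/-- `β̃_{ijk}(u) = β_{ijk}(u) + ∇λ_i(u) r_k(u) δ_ij`. -/
def betaT (i j k : Fin n) (u : V n) : ℝ :=
  S.beta i j k u + (if i = j then fderiv ℝ (S.lam i) u (S.r k u) else 0)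

/-- `γ̃_{ijk}(u) = γ_{ijk}(u) + ½ [∇λ_j(u) r_k(u) δ_ij + ∇λ_k(u) r_j(u) δ_ik]`. -/
def gammaT (i j k : Fin n) (u : V n) : ℝ :=
  S.gamma i j k u + (1 / 2) *
    ((if i = j then fderiv ℝ (S.lam j) u (S.r k u) else 0) +
     (if i = k then fderiv ℝ (S.lam k) u (S.r j u) else 0))

/-- `b̃_{ik}(u) = Σ_l (∂b_i/∂u_l)(u) r_{kl}(u)`. -/
def btilde (i k : Fin n) (u : V n) : ℝ :=
  ∑ m : Fin n, fderiv ℝ (S.bcoef i) u (Pi.single m 1) * S.r k u m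

/-- `u` is a `C¹` solution of the Cauchy problem on `[0,T] × ℝ`, with initial
data `u0`, staying in the neighborhood `{|u| < δ}` of `u = 0`. -/
structure IsSolutionOn (u : ℝ → ℝ → V n) (u0 : ℝ → V n) (T : ℝ) : Prop where
  smooth : ContDiffOn ℝ 1 (fun p : ℝ × ℝ => u p.1 p.2) (Icc 0 T ×ˢ univ)
  small : ∀ t ∈ Icc (0 : ℝ) T, ∀ x : ℝ, eunorm (u t x) < S.δ
  pde : ∀ t ∈ Icc (0 : ℝ) T, ∀ x : ℝ,
    derivWithin (fun s => u s x) (Icc 0 T) t +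
      Matrix.mulVec (S.A (u t x)) (deriv (fun y => u t y) x) = S.B (u t x)
  init : ∀ x : ℝ, u 0 x = u0 x

/-- The lifespan `T̃` of the Cauchy problem with initial data `u0`
(as an extended nonnegative real). -/
def lifespan (u0 : ℝ → V n) : ℝ≥0∞ :=
  ⨆ (T : ℝ) (_ : ∃ u : ℝ → ℝ → V n, S.IsSolutionOn u u0 T), ENNReal.ofReal T

/-- `v_i = l_i(u) u`. -/
def vC (u : ℝ → ℝ → V n) (i : Fin n) (t x : ℝ) : ℝ := S.l i (u t x) ⬝ᵥ u t x

/-- `w_i = l_i(u) u_x`. -/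
def wC (u : ℝ → ℝ → V n) (i : Fin n) (t x : ℝ) : ℝ :=
  S.l i (u t x) ⬝ᵥ deriv (fun y => u t y) x

/-- `v = (v_1, …, v_n)`. -/
def vV (u : ℝ → ℝ → V n) (t x : ℝ) : V n := fun i => S.vC u i t x

/-- `w = (w_1, …, w_n)`. -/
def wV (u : ℝ → ℝ → V n) (t x : ℝ) : V n := fun i => S.wC u i t x

/-- `U_∞(T) = sup_{0≤t≤T} sup_x |u(t,x)|`. -/
def Uinf (_S : HypSys n) (u : ℝ → ℝ → V n) (T : ℝ) : ℝ :=
  ⨆ p : Icc (0 : ℝ) T × ℝ, eunorm (u p.1.1 p.2)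

/-- `V_∞(T) = sup_{0≤t≤T} sup_x |v(t,x)|`. -/
def Vinf (u : ℝ → ℝ → V n) (T : ℝ) : ℝ :=
  ⨆ p : Icc (0 : ℝ) T × ℝ, eunorm (S.vV u p.1.1 p.2)

/-- `W_∞(T) = sup_{0≤t≤T} sup_x |w(t,x)|`. -/
def Winf (u : ℝ → ℝ → V n) (T : ℝ) : ℝ :=
  ⨆ p : Icc (0 : ℝ) T × ℝ, eunorm (S.wV u p.1.1 p.2)

/-- `V_1(T) = sup_{0≤t≤T} ∫_ℝ |v(t,x)| dx`. -/
def V1 (u : ℝ → ℝ → V n) (T : ℝ) : ℝ :=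
  ⨆ t : Icc (0 : ℝ) T, ∫ x : ℝ, eunorm (S.vV u t.1 x)

/-- `W_1(T) = sup_{0≤t≤T} ∫_ℝ |w(t,x)| dx`. -/
def W1 (u : ℝ → ℝ → V n) (T : ℝ) : ℝ :=
  ⨆ t : Icc (0 : ℝ) T, ∫ x : ℝ, eunorm (S.wV u t.1 x)

/-- `ξ` is a `j`-th characteristic curve on `[0,T]`:  `ξ'(t) = λ_j(u(t, ξ(t)))`. -/
def IsChar (u : ℝ → ℝ → V n) (j : Fin n) (T : ℝ) (ξ : ℝ → ℝ) : Prop :=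
  ∀ t ∈ Icc (0 : ℝ) T, HasDerivWithinAt ξ (S.lam j (u t (ξ t))) (Icc 0 T) t

/-- `Ṽ_1(T) = max_{i≠j} sup_{C̃_j} ∫_{C̃_j} |v_i| dt`. -/
def V1t (u : ℝ → ℝ → V n) (T : ℝ) : ℝ :=
  sSup {A : ℝ | ∃ i j : Fin n, i ≠ j ∧ ∃ ξ : ℝ → ℝ, S.IsChar u j T ξ ∧
    A = ∫ t in Icc (0 : ℝ) T, |S.vC u i t (ξ t)|}

/-- `W̃_1(T) = max_{i≠j} sup_{C̃_j} ∫_{C̃_j} |w_i| dt`. -/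
def W1t (u : ℝ → ℝ → V n) (T : ℝ) : ℝ :=
  sSup {A : ℝ | ∃ i j : Fin n, i ≠ j ∧ ∃ ξ : ℝ → ℝ, S.IsChar u j T ξ ∧
    A = ∫ t in Icc (0 : ℝ) T, |S.wC u i t (ξ t)|}

/-- `Q_W(T) = Σ_{j≠k} ∫∫ |w_j||w_k|`. -/
def QW (u : ℝ → ℝ → V n) (T : ℝ) : ℝ :=
  ∑ j : Fin n, ∑ k : Fin n, if j = k then 0 else
    ∫ t in Icc (0 : ℝ) T, ∫ x : ℝ, |S.wC u j t x| * |S.wC u k t x|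

/-- `Q_{VW}(T) = Σ_{j≠k} ∫∫ |v_j||w_k|`. -/
def QVW (u : ℝ → ℝ → V n) (T : ℝ) : ℝ :=
  ∑ j : Fin n, ∑ k : Fin n, if j = k then 0 else
    ∫ t in Icc (0 : ℝ) T, ∫ x : ℝ, |S.vC u j t x| * |S.wC u k t x|

/-- `Q_V(T) = Σ_{j≠k} ∫∫ |v_j||v_k|`. -/
def QV (u : ℝ → ℝ → V n) (T : ℝ) : ℝ :=
  ∑ j : Fin n, ∑ k : Fin n, if j = k then 0 else
    ∫ t in Icc (0 : ℝ) T, ∫ x : ℝ, |S.vC u j t x| * |S.vC u k t x|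

/-- The coefficient `a_0(t;i,y) = γ_{iii}(u)` of the Riccati equation (5.5),
evaluated at `(t,x)`. -/
def ricA0 (u : ℝ → ℝ → V n) (i : Fin n) (t x : ℝ) : ℝ := S.gamma i i i (u t x)

/-- The coefficient `a_1(t;i,y)` of the Riccati equation (5.5), evaluated at `(t,x)`. -/
def ricA1 (u : ℝ → ℝ → V n) (i : Fin n) (t x : ℝ) : ℝ :=
  (∑ j : Fin n, if j = i then 0 else
      (S.gamma i i j (u t x) + S.gamma i j i (u t x)) * S.wC u j t x)
  + (∑ j : Fin n, S.sigma i j i (u t x) * S.bcoef j (u t x))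
  + (S.btilde i i (u t x) - S.btilde i i ((u t x i) • eb i))

/-- The coefficient `a_2(t;i,y)` of the Riccati equation (5.5), evaluated at `(t,x)`. -/
def ricA2 (u : ℝ → ℝ → V n) (i : Fin n) (t x : ℝ) : ℝ :=
  (∑ j : Fin n, ∑ k : Fin n, if j = k ∨ j = i ∨ k = i then 0 else
      S.gamma i j k (u t x) * S.wC u j t x * S.wC u k t x)
  + (∑ j : Fin n, ∑ k : Fin n, if k = i then 0 else
      S.sigma i j k (u t x) * S.bcoef j (u t x) * S.wC u k t x)
  + (∑ k : Fin n, if k = i then 0 else S.btilde i k (u t x) * S.wC u k t x)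

/-- `u` is a `C¹` solution of the system on the open set `Ω`, with values in
the neighborhood `{|u| < δ}`. -/
structure IsSol1On (u : ℝ → ℝ → V n) (Ω : Set (ℝ × ℝ)) : Prop where
  isOpen : IsOpen Ω
  smooth : ContDiffOn ℝ 1 (fun p : ℝ × ℝ => u p.1 p.2) Ω
  small : ∀ p ∈ Ω, eunorm (u p.1 p.2) < S.δ
  pde : ∀ p ∈ Ω, deriv (fun s => u s p.2) p.1 +
    Matrix.mulVec (S.A (u p.1 p.2)) (deriv (fun y => u p.1 y) p.2) = S.B (u p.1 p.2)

/-- `u` is a `C²` solution of the system on the open set `Ω`, with values in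
the neighborhood `{|u| < δ}`. -/
structure IsSol2On (u : ℝ → ℝ → V n) (Ω : Set (ℝ × ℝ)) : Prop where
  isOpen : IsOpen Ω
  smooth : ContDiffOn ℝ 2 (fun p : ℝ × ℝ => u p.1 p.2) Ω
  small : ∀ p ∈ Ω, eunorm (u p.1 p.2) < S.δ
  pde : ∀ p ∈ Ω, deriv (fun s => u s p.2) p.1 +
    Matrix.mulVec (S.A (u p.1 p.2)) (deriv (fun y => u p.1 y) p.2) = S.B (u p.1 p.2)

end HypSys

/-- The family of initial data `u(0,x) = f(ε,x)`: `f` is `C¹` in `(ε,x)`,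
`f(0,x) ≡ 0`, `∂²f/∂ε∂x(·,x)` is uniformly `C^r` (Hölder) on `[0,ε₁]`,
`ψ(x) = ∂f/∂ε(0,x)` is `C¹`, and `M = sup_x |ψ'(x)| < ∞`. -/
structure InitData (n : ℕ) where
  f : ℝ → ℝ → V n
  ε₁ : ℝ
  ε₁_pos : 0 < ε₁
  rexp : ℝ
  rexp_pos : 0 < rexp
  rexp_le_one : rexp ≤ 1
  smooth : ContDiff ℝ 1 (fun p : ℝ × ℝ => f p.1 p.2)
  zero : ∀ x : ℝ, f 0 x = 0
  psi_smooth : ContDiff ℝ 1 (fun x : ℝ => deriv (fun e => f e x) 0)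
  M_bdd : BddAbove (Set.range fun x : ℝ =>
    eunorm (deriv (fun x' : ℝ => deriv (fun e => f e x') 0) x))
  holder : ∃ CH : ℝ, ∀ x ε ε' : ℝ, ε ∈ Set.Icc 0 ε₁ → ε' ∈ Set.Icc 0 ε₁ →
    eunorm (deriv (fun e => deriv (fun y => f e y) x) ε
      - deriv (fun e => deriv (fun y => f e y) x) ε') ≤ CH * |ε - ε'| ^ rexp

namespace InitData

variable {n : ℕ} (D : InitData n)

/-- `ψ(x) = ∂f/∂ε(0,x)`. -/
def psi : ℝ → V n := fun x => deriv (fun e => D.f e x) 0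

/-- `M = sup_x |ψ'(x)|`. -/
def M : ℝ := ⨆ x : ℝ, eunorm (deriv D.psi x)

/-- The smallness conditions (1.17) on the initial data:
`∫|∂f/∂x(ε,·)| ≤ K₁ ε` and `∫|f(ε,·)| ≤ K₂ ε / (M+1)`. -/
def Small (K1 K2 ε : ℝ) : Prop :=
  Integrable (fun x : ℝ => eunorm (deriv (fun y => D.f ε y) x)) ∧
  Integrable (fun x : ℝ => eunorm (D.f ε x)) ∧
  (∫ x : ℝ, eunorm (deriv (fun y => D.f ε y) x)) ≤ K1 * ε ∧
  (∫ x : ℝ, eunorm (D.f ε x)) ≤ K2 / (D.M + 1) * ε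

end InitData

/-- The right-hand side of the sharp lifespan formula (1.26):
`max_{i∈J₁} sup_{x∈ℝ} ( −(1/α!) ∂^{α+1}λ_i/∂u_i^{α+1}(0) ψ_i(x)^α ψ_i'(x) )`. -/
def blowRate {n : ℕ} (S : HypSys n) (D : InitData n) (a : ℕ) : ℝ :=
  ⨆ i : {i : Fin n // ¬ S.WLD i ∧ S.IsAlphaOf i a}, ⨆ x : ℝ,
    (-(1 / (Nat.factorial a : ℝ)) * S.axisDeriv i.1 (a + 1) * (D.psi x) i.1 ^ a *
      deriv (fun x' => (D.psi x') i.1) x)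

section Aux

open Asymptotics

/-- sum of absolute values of all coordinates but the `i`-th -/
def dd {n : ℕ} (i : Fin n) (u : V n) : ℝ := ∑ j, if j = i then 0 else |u j|

lemma dd_nonneg {n : ℕ} (i : Fin n) (u : V n) : 0 ≤ dd i u :=
  Finset.sum_nonneg fun j _ => by split_ifs <;> positivity

lemma norm_le_eunorm {n : ℕ} (u : V n) : ‖u‖ ≤ eunorm u := by
  refine (pi_norm_le_iff_of_nonneg (Real.sqrt_nonneg _)).2 fun i => ?_
  rw [Real.norm_eq_abs]
  apply Real.abs_le_sqrt
  exact Finset.single_le_sum (f := fun i => u i ^ 2) (fun j _ => sq_nonneg _) (Finset.mem_univ i)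

lemma eunorm_cont {n : ℕ} : Continuous (eunorm : V n → ℝ) := by
  unfold eunorm; fun_prop

lemma eunorm_axis {n : ℕ} (i : Fin n) (s : ℝ) : eunorm (s • eb i : V n) = |s| := by
  unfold eunorm
  rw [Finset.sum_eq_single i]
  · simp [eb, Real.sqrt_sq_eq_abs]
  · intro j _ hj; simp [eb, hj]
  · simp

lemma unif_bound {n : ℕ} {ι : Type*} [Finite ι] (f g : ι → V n → ℝ)
    (h : ∀ i, f i =O[𝓝 0] g i) :
    ∃ K > (0 : ℝ), ∀ᶠ u in 𝓝 (0 : V n), ∀ i, |f i u| ≤ K * |g i u| := by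
  cases nonempty_fintype ι
  choose K hK hK' using fun i => (h i).exists_pos
  refine ⟨1 + ∑ i, K i, by have := Finset.sum_nonneg (s := Finset.univ) (fun i _ => (hK i).le); linarith, ?_⟩
  rw [Filter.eventually_all]
  intro i
  filter_upwards [(hK' i).bound] with u hu
  refine hu.trans ?_
  have : K i ≤ ∑ i, K i := Finset.single_le_sum (fun i _ => (hK i).le) (Finset.mem_univ i)
  simp only [Real.norm_eq_abs]
  gcongr
  linarith

lemma axis_tendsto {n : ℕ} (i : Fin n) :
    Tendsto (fun u : V n => u i • (eb i : V n)) (𝓝 0) (𝓝 0) := by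
  have : Continuous (fun u : V n => u i • (eb i : V n)) := by fun_prop
  simpa using this.tendsto 0

/-- Lipschitz comparison with the value on the `i`-th axis. -/
lemma axis_bigO {n : ℕ} (F : V n → ℝ) (hF : ContDiffAt ℝ 1 F 0) (i : Fin n) :
    (fun u => F u - F (u i • eb i)) =O[𝓝 0] dd i := by
  obtain ⟨K, t, ht, hL⟩ := hF.exists_lipschitzOnWith
  refine IsBigO.of_bound K ?_
  filter_upwards [ht, axis_tendsto i ht] with u h1 h2
  have := hL.dist_le_mul u h1 _ h2
  rw [Real.dist_eq] at this
  rw [Real.norm_eq_abs, Real.norm_eq_abs, abs_of_nonneg (dd_nonneg i u)]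
  refine this.trans ?_
  gcongr
  refine (dist_pi_le_iff (dd_nonneg i u)).2 fun j => ?_
  by_cases hj : j = i
  · subst hj; simpa [eb] using dd_nonneg j u
  · have h3 := Finset.single_le_sum (f := fun j => if j = i then 0 else |u j|)
      (fun j _ => by split_ifs <;> positivity) (Finset.mem_univ j)
    simpa [eb, hj, Real.dist_eq, dd] using h3

lemma cd_deriv {h : ℝ → ℝ} {x : ℝ} (hh : ContDiffAt ℝ (⊤ : ℕ∞) h x) :
    ContDiffAt ℝ (⊤ : ℕ∞) (deriv h) x := by
  have h1 : ContDiffAt ℝ (⊤ : ℕ∞) (fun y => fderiv ℝ h y 1) x :=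
    (hh.fderiv_right (m := (⊤ : ℕ∞)) (by norm_cast)).clm_apply contDiffAt_const
  simpa using h1

/-- Vanishing derivatives give power decay. -/
lemma flat_bigO (a : ℕ) : ∀ h : ℝ → ℝ, ContDiffAt ℝ (⊤ : ℕ∞) h 0 →
    (∀ k < a, iteratedDeriv k h 0 = 0) → h =O[𝓝 0] fun s => |s| ^ a := by
  induction a with
  | zero =>
    intro h hh _
    simpa using hh.continuousAt.isBigO_one ℝ
  | succ a ih =>
    intro h hh hk
    have h1 : ContDiffAt ℝ (⊤ : ℕ∞) (deriv h) 0 := by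
      exact cd_deriv hh
    have h2 := ih (deriv h) h1 (fun k hka => by
      rw [← iteratedDeriv_succ']; exact hk (k+1) (by omega))
    obtain ⟨K, hK⟩ := h2.bound
    have hd : ∀ᶠ s in 𝓝 (0:ℝ), DifferentiableAt ℝ h s := by
      have := (hh.of_le (m := 1) (by exact_mod_cast le_top)).eventually (by simp)
      filter_upwards [this] with s hs using hs.differentiableAt (by simp)
    obtain ⟨ε, hε, hb⟩ := Metric.eventually_nhds_iff_ball.1 (hK.and hd)
    refine IsBigO.of_bound |K| ?_
    filter_upwards [Metric.ball_mem_nhds 0 hε] with s hs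
    have h0 : h 0 = 0 := by simpa using hk 0 (by omega)
    have key := (convex_closedBall (0:ℝ) |s|).norm_image_sub_le_of_norm_deriv_le (f := h)
      (C := |K| * |s| ^ a) (x := 0) (y := s) ?_ ?_ (by simp) (by simp)
    · rw [h0] at key
      simpa [pow_succ, mul_assoc] using key
    · intro x hx
      refine (hb x ?_).2
      simp at hx hs ⊢; linarith
    · intro x hx
      have hx' : |x| ≤ |s| := by simpa using hx
      have := (hb x (by simp at hs ⊢; linarith)).1
      refine this.trans ?_
      simp only [norm_pow, Real.norm_eq_abs, abs_abs]
      gcongr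
      exact le_abs_self K

lemma cd_dot {n : ℕ} {m : WithTop ℕ∞} {f g : V n → V n} {x : V n} (hf : ContDiffAt ℝ m f x)
    (hg : ContDiffAt ℝ m g x) : ContDiffAt ℝ m (fun u => f u ⬝ᵥ g u) x := by
  unfold dotProduct
  exact ContDiffAt.sum fun i _ => (contDiffAt_pi.1 hf i).mul (contDiffAt_pi.1 hg i)

namespace HypSys

variable {n : ℕ} (S : HypSys n)

lemma nbhd (u : V n) (hu : eunorm u < S.δ) : {u | eunorm u < S.δ} ∈ 𝓝 u :=
  (isOpen_lt eunorm_cont continuous_const).mem_nhds hu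

lemma zero_mem : eunorm (0 : V n) < S.δ := by simpa [eunorm] using S.δ_pos

lemma ev_mem : ∀ᶠ u in 𝓝 (0 : V n), eunorm u < S.δ := S.nbhd 0 S.zero_mem

lemma cd_l (i : Fin n) (u : V n) (hu : eunorm u < S.δ) : ContDiffAt ℝ (⊤ : ℕ∞) (S.l i) u :=
  (S.smooth_l i).contDiffAt (S.nbhd u hu)
lemma cd_r (i : Fin n) (u : V n) (hu : eunorm u < S.δ) : ContDiffAt ℝ (⊤ : ℕ∞) (S.r i) u :=
  (S.smooth_r i).contDiffAt (S.nbhd u hu)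
lemma cd_lam (i : Fin n) (u : V n) (hu : eunorm u < S.δ) : ContDiffAt ℝ (⊤ : ℕ∞) (S.lam i) u :=
  (S.smooth_lam i).contDiffAt (S.nbhd u hu)
lemma cd_B (u : V n) (hu : eunorm u < S.δ) : ContDiffAt ℝ (⊤ : ℕ∞) S.B u :=
  S.smooth_B.contDiffAt (S.nbhd u hu)
lemma cd_b (i : Fin n) (u : V n) (hu : eunorm u < S.δ) : ContDiffAt ℝ (⊤ : ℕ∞) (S.bcoef i) u :=
  cd_dot (S.cd_l i u hu) (S.cd_B u hu)

lemma cd_fd {E : Type*} [NormedAddCommGroup E] [NormedSpace ℝ E] {f : V n → E} {g : V n → V n}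
    {u : V n} (hf : ContDiffAt ℝ (⊤ : ℕ∞) f u) (hg : ContDiffAt ℝ (⊤ : ℕ∞) g u) :
    ContDiffAt ℝ (⊤ : ℕ∞) (fun x => fderiv ℝ f x (g x)) u :=
  (hf.fderiv_right (m := (⊤ : ℕ∞)) (by norm_cast)).clm_apply hg

lemma cd_gamma (i j k : Fin n) : ContDiffAt ℝ (⊤ : ℕ∞) (S.gamma i j k) 0 := by
  have h0 := S.zero_mem
  unfold gamma
  refine (((S.cd_lam k 0 h0).sub (S.cd_lam j 0 h0)).mul
    (cd_dot (S.cd_l i 0 h0) (cd_fd (S.cd_r j 0 h0) (S.cd_r k 0 h0)))).sub ?_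
  split_ifs
  · exact cd_fd (S.cd_lam j 0 h0) (S.cd_r k 0 h0)
  · exact contDiffAt_const

lemma cd_sigma (i j k : Fin n) : ContDiffAt ℝ (⊤ : ℕ∞) (S.sigma i j k) 0 := by
  have h0 := S.zero_mem
  unfold sigma
  exact cd_dot (S.cd_l i 0 h0) ((cd_fd (S.cd_r k 0 h0) (S.cd_r j 0 h0)).sub
    (cd_fd (S.cd_r j 0 h0) (S.cd_r k 0 h0)))

/-- total coefficient of `w_j` in the lower-order part -/
def HH (i j : Fin n) (u : V n) : ℝ :=
  (∑ k, S.sigma i j k u * S.bcoef k u) + fderiv ℝ (S.bcoef i) u (S.r j u)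

lemma cd_HH (i j : Fin n) : ContDiffAt ℝ (⊤ : ℕ∞) (S.HH i j) 0 := by
  have h0 := S.zero_mem
  unfold HH
  exact (ContDiffAt.sum fun k _ => (S.cd_sigma i j k).mul (S.cd_b k 0 h0)).add
    (cd_fd (S.cd_b i 0 h0) (S.cd_r j 0 h0))

lemma expand (u : V n) (hu : eunorm u < S.δ) (x : V n) :
    x = ∑ k, (S.l k u ⬝ᵥ x) • S.r k u := by
  let L : Matrix (Fin n) (Fin n) ℝ := Matrix.of fun i m => S.l i u m
  let R : Matrix (Fin n) (Fin n) ℝ := Matrix.of fun m j => S.r j u m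
  have h : L * R = 1 := by
    ext i j
    have := S.norm_lr u hu i j
    rw [Matrix.one_apply, ← this]; rfl
  have h' : R * L = 1 := mul_eq_one_comm.1 h
  have h2 : (R * L) *ᵥ x = x := by rw [h', Matrix.one_mulVec]
  rw [← Matrix.mulVec_mulVec] at h2
  ext m
  conv_lhs => rw [← h2]
  simp only [Finset.sum_apply, Pi.smul_apply, smul_eq_mul]
  change ∑ k : Fin n, R m k * (L *ᵥ x) k = _
  refine Finset.sum_congr rfl fun k _ => ?_
  rw [mul_comm]; rfl

lemma r_le_one (u : V n) (hu : eunorm u < S.δ) (k j : Fin n) : |S.r k u j| ≤ 1 := by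
  have h := S.norm_rr u hu k
  have h2 := Finset.single_le_sum (f := fun j => S.r k u j * S.r k u j)
      (fun j _ => mul_self_nonneg _) (Finset.mem_univ j)
  rw [abs_le_one_iff_mul_self_le_one]
  exact h2.trans h.le

def vv (u : V n) : V n := fun k => S.l k u ⬝ᵥ u

lemma dd_le_vv (hNorm : S.Normalized) :
    ∃ K > (0:ℝ), ∀ᶠ u in 𝓝 (0 : V n), ∀ i, dd i u ≤ K * dd i (S.vv u) := by
  have h0 := S.zero_mem
  obtain ⟨K1, hK1, hr⟩ := unif_bound (n := n) (ι := Fin n × Fin n)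
    (fun p u => S.r p.1 u p.2 - S.r p.1 (u p.1 • eb p.1) p.2) (fun p => dd p.1)
    (fun p => axis_bigO (fun u => S.r p.1 u p.2)
      ((contDiffAt_pi.1 (S.cd_r p.1 0 h0) p.2).of_le (by exact_mod_cast le_top)) p.1)
  refine ⟨2 * (n + 1), by positivity, ?_⟩
  have hv : ∀ i, ∀ᶠ u in 𝓝 (0 : V n), n * K1 * |S.vv u i| ≤ 1 / 2 := by
    intro i
    have hc : ContinuousAt (fun u => n * K1 * |S.vv u i|) (0 : V n) :=
      continuousAt_const.mul (cd_dot (S.cd_l i 0 h0) contDiffAt_id).continuousAt.abs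
    have : Tendsto (fun u => n * K1 * |S.vv u i|) (𝓝 (0 : V n)) (𝓝 0) := by
      simpa [ContinuousAt, vv] using hc
    exact this.eventually_le_const (by norm_num)
  filter_upwards [hr, Filter.eventually_all.2 hv, S.ev_mem] with u hr hv hu i
  have hui : |u i| < S.δ :=
    lt_of_le_of_lt ((norm_le_pi_norm u i).trans (norm_le_eunorm u)) hu
  have hdn := dd_nonneg i u
  have hDn := dd_nonneg i (S.vv u)
  have hj : ∀ j, (if j = i then 0 else |u j|) ≤ dd i (S.vv u) + K1 * |S.vv u i| * dd i u := by
    intro j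
    split_ifs with hji
    · positivity
    have h1 : u j = ∑ k, S.vv u k * S.r k u j := by
      conv_lhs => rw [S.expand u hu u]
      simp [vv]
    have h2 : |S.r i u j| ≤ K1 * dd i u := by
      have := hr (i, j)
      rw [abs_of_nonneg hdn] at this
      simp only [hNorm i (u i) hui] at this
      simpa [eb, hji] using this
    have h3 : ∀ k, |S.vv u k * S.r k u j| ≤ (if k = i then 0 else |S.vv u k|) +
        (if k = i then K1 * |S.vv u i| * dd i u else 0) := by
      intro k
      rw [abs_mul]
      split_ifs with hki
      · subst hki
        calc |S.vv u k| * |S.r k u j| ≤ |S.vv u k| * (K1 * dd k u) := by gcongr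
          _ = _ := by ring
      · simpa using mul_le_of_le_one_right (abs_nonneg _) (S.r_le_one u hu k j)
    calc |u j| ≤ ∑ k, |S.vv u k * S.r k u j| := by
            rw [h1]; exact Finset.abs_sum_le_sum_abs _ _
      _ ≤ _ := Finset.sum_le_sum fun k _ => h3 k
      _ = _ := by rw [Finset.sum_add_distrib]; simp [dd]
  have h4 : dd i u ≤ n * (dd i (S.vv u) + K1 * |S.vv u i| * dd i u) := by
    calc dd i u ≤ ∑ j : Fin n, (dd i (S.vv u) + K1 * |S.vv u i| * dd i u) :=
          Finset.sum_le_sum fun j _ => hj j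
      _ = _ := by simp; ring
  have h5 : n * K1 * |S.vv u i| * dd i u ≤ 1 / 2 * dd i u := by gcongr; exact hv i
  nlinarith

lemma axis_hasDeriv {f : V n → ℝ} (i : Fin n) (s : ℝ)
    (hf : DifferentiableAt ℝ f (s • eb i)) :
    HasDerivAt (fun s : ℝ => f (s • eb i)) (fderiv ℝ f (s • eb i) (eb i)) s := by
  have h1 : HasDerivAt (fun s : ℝ => s • (eb i : V n)) (eb i) s := by
    simpa using (hasDerivAt_id s).smul_const (eb i : V n)
  exact hf.hasFDerivAt.comp_hasDerivAt s h1

lemma HH_axis (hNorm : S.Normalized) (hMatch : S.Matching) (i j : Fin n) (s : ℝ)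
    (hs : |s| < S.δ) : S.HH i j (s • eb j) = 0 := by
  have hb : ∀ k, ∀ t : ℝ, |t| < S.δ → S.bcoef k (t • eb j) = 0 := by
    intro k t ht; simp [bcoef, hMatch j t ht]
  have hmem : eunorm (s • eb j : V n) < S.δ := by rwa [eunorm_axis]
  have hd := axis_hasDeriv (f := S.bcoef i) j s
    ((S.cd_b i _ hmem).differentiableAt (by simp))
  have hz : (fun t : ℝ => S.bcoef i (t • eb j)) =ᶠ[𝓝 s] fun _ => 0 := by
    have : ∀ᶠ t in 𝓝 s, |t| < S.δ := continuous_abs.continuousAt.eventually_lt_const hs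
    filter_upwards [this] with t ht using hb i t ht
  have hd0 := (hasDerivAt_const s (0:ℝ)).congr_of_eventuallyEq hz
  unfold HH
  rw [hNorm j s hs, hd.unique hd0]
  simp [hb _ s hs]

lemma HH_bound (hNorm : S.Normalized) (hMatch : S.Matching) :
    ∃ K > (0:ℝ), ∀ᶠ u in 𝓝 (0 : V n), ∀ i j, |S.HH i j u| ≤ K * dd j u := by
  obtain ⟨K, hK, h⟩ := unif_bound (n := n) (ι := Fin n × Fin n)
    (fun p u => S.HH p.1 p.2 u - S.HH p.1 p.2 (u p.2 • eb p.2)) (fun p => dd p.2)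
    (fun p => axis_bigO _ ((S.cd_HH p.1 p.2).of_le (by exact_mod_cast le_top)) p.2)
  refine ⟨K, hK, ?_⟩
  filter_upwards [h, S.ev_mem] with u h hu i j
  have hui : |u j| < S.δ :=
    lt_of_le_of_lt ((norm_le_pi_norm u j).trans (norm_le_eunorm u)) hu
  simpa [S.HH_axis hNorm hMatch i j _ hui, abs_of_nonneg (dd_nonneg j u)] using h (i, j)

lemma gamma_bound :
    ∃ K > (0:ℝ), ∀ᶠ u in 𝓝 (0 : V n), ∀ i j k, |S.gamma i j k u| ≤ K := by
  obtain ⟨K, hK, h⟩ := unif_bound (n := n) (ι := Fin n × Fin n × Fin n)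
    (fun p u => S.gamma p.1 p.2.1 p.2.2 u) (fun p _ => 1)
    (fun p => (S.cd_gamma p.1 p.2.1 p.2.2).continuousAt.isBigO_one ℝ)
  refine ⟨K, hK, ?_⟩
  filter_upwards [h] with u h i j k
  simpa using h (i, j, k)

lemma gamma_offdiag (i j : Fin n) (h : j ≠ i) (u : V n) : S.gamma i j j u = 0 := by
  simp [gamma, h.symm]

lemma axisDeriv_zero (a : ℕ) (hMin : S.IsMinAlpha a) (i : Fin n) (k : ℕ) (h1 : 1 ≤ k)
    (h2 : k ≤ a) : S.axisDeriv i k = 0 := by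
  by_cases hW : S.WLD i
  · have hz : (fun t : ℝ => S.lam i (t • eb i)) =ᶠ[𝓝 0] fun _ => S.lam i 0 := by
      have : ∀ᶠ t in 𝓝 (0:ℝ), |t| < S.δ :=
        continuous_abs.continuousAt.eventually_lt_const (by simpa using S.δ_pos)
      filter_upwards [this] with t ht using hW t ht
    unfold axisDeriv
    rw [hz.iteratedDeriv_eq k]
    simp [iteratedDeriv_const]
    omega
  · induction k using Nat.strong_induction_on with
    | _ k ih =>
      by_contra hne
      have : S.IsAlphaOf i (k - 1) := by
        refine ⟨fun m hm1 hm2 => ih m (by omega) hm1 (by omega), ?_⟩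
        rwa [Nat.sub_add_cancel h1]
      have := hMin.2 i hW _ this
      omega

lemma gamma_diag_axis (hNorm : S.Normalized) (a : ℕ) (hMin : S.IsMinAlpha a) (i : Fin n) :
    (fun s : ℝ => S.gamma i i i (s • eb i)) =O[𝓝 0] fun s => |s| ^ a := by
  set g : ℝ → ℝ := fun s => S.lam i (s • eb i) with hg
  have hgd : ContDiffAt ℝ (⊤ : ℕ∞) g 0 := by
    have h1 : ContDiffAt ℝ (⊤ : ℕ∞) (S.lam i) ((0:ℝ) • eb i) := by
      simpa using S.cd_lam i 0 S.zero_mem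
    exact h1.comp (0:ℝ) (contDiffAt_id.smul contDiffAt_const)
  have h := flat_bigO a (deriv g) (cd_deriv hgd) (fun k hk => by
    rw [← iteratedDeriv_succ']
    exact S.axisDeriv_zero a hMin i (k+1) (by omega) (by omega))
  refine h.neg_left.congr' ?_ EventuallyEq.rfl
  have : ∀ᶠ t in 𝓝 (0:ℝ), |t| < S.δ :=
    continuous_abs.continuousAt.eventually_lt_const (by simpa using S.δ_pos)
  filter_upwards [this] with s hs
  have hmem : eunorm (s • eb i : V n) < S.δ := by rwa [eunorm_axis]
  have hd := axis_hasDeriv (f := S.lam i) i s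
    ((S.cd_lam i _ hmem).differentiableAt (by simp))
  simp [gamma, hNorm i s hs, hg, hd.deriv]

lemma gamma_diag (hNorm : S.Normalized) (a : ℕ) (hMin : S.IsMinAlpha a) :
    ∃ K > (0:ℝ), ∀ᶠ u in 𝓝 (0 : V n), ∀ i, |S.gamma i i i u| ≤ K * (dd i u + |u i| ^ a) := by
  obtain ⟨K1, hK1, h1⟩ := unif_bound (n := n) (ι := Fin n)
    (fun i u => S.gamma i i i u - S.gamma i i i (u i • eb i)) (fun i => dd i)
    (fun i => axis_bigO _ ((S.cd_gamma i i i).of_le (by exact_mod_cast le_top)) i)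
  obtain ⟨K2, hK2, h2⟩ := unif_bound (n := n) (ι := Fin n)
    (fun i u => S.gamma i i i (u i • eb i)) (fun i u => |u i| ^ a)
    (fun i => (S.gamma_diag_axis hNorm a hMin i).comp_tendsto
      (by simpa using (continuous_apply i).tendsto (0 : V n)))
  refine ⟨K1 + K2, by positivity, ?_⟩
  filter_upwards [h1, h2] with u h1 h2 i
  have h1 := h1 i
  have h2 := h2 i
  have hd := dd_nonneg i u
  have hp : 0 ≤ |u i| ^ a := by positivity
  rw [abs_of_nonneg hd] at h1
  rw [abs_of_nonneg hp] at h2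
  have := abs_add_le (S.gamma i i i u - S.gamma i i i (u i • eb i)) (S.gamma i i i (u i • eb i))
  rw [sub_add_cancel] at this
  nlinarith [mul_nonneg hK1.le hp, mul_nonneg hK2.le hd]

/-- The pointwise algebraic estimate. -/
lemma pointwise (hNorm : S.Normalized) (hMatch : S.Matching) (a : ℕ) (hMin : S.IsMinAlpha a) :
    ∃ C > (0:ℝ), ∀ᶠ u in 𝓝 (0 : V n), ∀ (i : Fin n) (w : V n),
      |(∑ j, ∑ k, S.gamma i j k u * w j * w k) + ∑ j, w j * S.HH i j u| ≤
        C * ((∑ j, ∑ k, if j = k then 0 else |w j * w k| + |S.vv u j * w k|) +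
          (∑ j, if j = i then 0 else |S.vv u j| * w i ^ 2) + |u i| ^ a * w i ^ 2) := by
  obtain ⟨K0, hK0, h0⟩ := S.dd_le_vv hNorm
  obtain ⟨K1, hK1, h1⟩ := S.HH_bound hNorm hMatch
  obtain ⟨K2, hK2, h2⟩ := S.gamma_bound
  obtain ⟨K3, hK3, h3⟩ := S.gamma_diag hNorm a hMin
  refine ⟨K2 + K1 * K0 + K3 * K0 + K3, by positivity, ?_⟩
  filter_upwards [h0, h1, h2, h3] with u h0 h1 h2 h3 i w
  set X := ∑ j, ∑ k, if j = k then 0 else |w j * w k| with hX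
  set Y := ∑ j, ∑ k, if j = k then 0 else |S.vv u j * w k| with hY
  set Z := dd i (S.vv u) * w i ^ 2 with hZ
  set W := |u i| ^ a * w i ^ 2 with hW
  have hXn : 0 ≤ X := Finset.sum_nonneg fun j _ => Finset.sum_nonneg fun k _ => by
    split_ifs <;> positivity
  have hYn : 0 ≤ Y := Finset.sum_nonneg fun j _ => Finset.sum_nonneg fun k _ => by
    split_ifs <;> positivity
  have hZn : 0 ≤ Z := mul_nonneg (dd_nonneg _ _) (sq_nonneg _)
  have hWn : 0 ≤ W := by positivity
  have e1 : (∑ j, ∑ k, if j = k then 0 else |w j * w k| + |S.vv u j * w k|) = X + Y := by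
    rw [hX, hY, ← Finset.sum_add_distrib]
    refine Finset.sum_congr rfl fun j _ => ?_
    rw [← Finset.sum_add_distrib]
    refine Finset.sum_congr rfl fun k _ => ?_
    split_ifs <;> simp
  have e2 : (∑ j, if j = i then 0 else |S.vv u j| * w i ^ 2) = Z := by
    rw [hZ, dd, Finset.sum_mul]
    refine Finset.sum_congr rfl fun k _ => ?_
    split_ifs <;> simp
  rw [e1, e2]
  have b1 : |∑ j, ∑ k, S.gamma i j k u * w j * w k| ≤ K2 * X + K3 * (K0 * Z + W) := by
    have hjk : ∀ j k, |S.gamma i j k u * w j * w k| ≤ K2 * (if j = k then 0 else |w j * w k|) +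
        (if j = k then (if j = i then K3 * (K0 * Z + W) else 0) else 0) := by
      intro j k
      by_cases hjk : j = k
      · subst hjk
        by_cases hji : j = i
        · subst hji
          simp only [if_true, mul_zero, zero_add]
          rw [mul_assoc, abs_mul, ← pow_two, abs_of_nonneg (sq_nonneg (w j))]
          calc |S.gamma j j j u| * w j ^ 2 ≤ K3 * (K0 * dd j (S.vv u) + |u j| ^ a) * w j ^ 2 := by
                gcongr
                exact (h3 j).trans (by gcongr; exact h0 j)
            _ = _ := by rw [hZ, hW]; ring
        · simp [S.gamma_offdiag i j hji, hji]
      · simp only [hjk, if_false, add_zero]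
        rw [mul_assoc, abs_mul]
        gcongr
        exact h2 i j k
    calc |∑ j, ∑ k, S.gamma i j k u * w j * w k|
        ≤ ∑ j, ∑ k, |S.gamma i j k u * w j * w k| :=
          (Finset.abs_sum_le_sum_abs _ _).trans
            (Finset.sum_le_sum fun j _ => Finset.abs_sum_le_sum_abs _ _)
      _ ≤ _ := Finset.sum_le_sum fun j _ => Finset.sum_le_sum fun k _ => hjk j k
      _ = _ := by
        simp only [Finset.sum_add_distrib, ← Finset.mul_sum]
        simp [hX]
  have b2 : |∑ j, w j * S.HH i j u| ≤ K1 * K0 * Y := by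
    calc |∑ j, w j * S.HH i j u| ≤ ∑ j, |w j * S.HH i j u| := Finset.abs_sum_le_sum_abs _ _
      _ ≤ ∑ j, K1 * K0 * (dd j (S.vv u) * |w j|) := by
          refine Finset.sum_le_sum fun j _ => ?_
          rw [abs_mul]
          calc |w j| * |S.HH i j u| ≤ |w j| * (K1 * (K0 * dd j (S.vv u))) := by
                gcongr
                exact (h1 i j).trans (by gcongr; exact h0 j)
            _ = _ := by ring
      _ = _ := by
          rw [← Finset.mul_sum, hY, Finset.sum_comm]
          congr 1
          refine Finset.sum_congr rfl fun j _ => ?_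
          rw [dd, Finset.sum_mul]
          refine Finset.sum_congr rfl fun k _ => ?_
          split_ifs <;> simp [abs_mul]
  refine (abs_add_le _ _).trans ((add_le_add b1 b2).trans ?_)
  have p1 := mul_pos hK1 hK0
  have p2 := mul_pos hK3 hK0
  nlinarith [mul_nonneg hK2.le hYn, mul_nonneg hK2.le hZn, mul_nonneg hK2.le hWn,
    mul_nonneg p1.le hXn, mul_nonneg p1.le hZn, mul_nonneg p1.le hWn,
    mul_nonneg p2.le hXn, mul_nonneg p2.le hYn, mul_nonneg p2.le hWn,
    mul_nonneg hK3.le hXn, mul_nonneg hK3.le hYn, mul_nonneg hK3.le hZn]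

end HypSys

end Aux

/-- **The pointwise bound (3.16)** on the source term `G_i` of the
characteristic-form decomposition of `w_i`.  In normalized coordinates with
the matching condition and `α = min{α_i : i ∈ J} < ∞`, there is a constant
`C > 0` depending only on the system such that for any `C¹` solution `u` with
`|u|` small:
`|G_i| ≤ C [Σ_{j≠k}(|w_j w_k| + |v_j w_k|) + Σ_{j≠i}|v_j| w_i² + |u_i|^α w_i²]`. -/
theorem stmt18 {n : ℕ} (S : HypSys n) (hNorm : S.Normalized) (hMatch : S.Matching)
    (a : ℕ) (hMin : S.IsMinAlpha a) :
    ∃ δ' : ℝ, 0 < δ' ∧ δ' ≤ S.δ ∧ ∃ C > (0 : ℝ),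
    ∀ u : ℝ → ℝ → V n, ∀ Ω : Set (ℝ × ℝ), S.IsSol1On u Ω →
    (∀ p ∈ Ω, eunorm (u p.1 p.2) < δ') →
    ∀ i : Fin n, ∀ p ∈ Ω,
      |(∑ j : Fin n, ∑ k : Fin n,
            S.gamma i j k (u p.1 p.2) * S.wC u j p.1 p.2 * S.wC u k p.1 p.2) +
          (∑ j : Fin n, ∑ k : Fin n,
            S.sigma i j k (u p.1 p.2) * S.wC u j p.1 p.2 * S.bcoef k (u p.1 p.2)) +
          deriv (fun y => S.bcoef i (u p.1 y)) p.2| ≤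
        C * ((∑ j : Fin n, ∑ k : Fin n, if j = k then 0 else
                |S.wC u j p.1 p.2 * S.wC u k p.1 p.2| +
                  |S.vC u j p.1 p.2 * S.wC u k p.1 p.2|) +
             (∑ j : Fin n, if j = i then 0 else
                |S.vC u j p.1 p.2| * S.wC u i p.1 p.2 ^ 2) +
             |u p.1 p.2 i| ^ a * S.wC u i p.1 p.2 ^ 2) := by
  obtain ⟨C, hC, hev⟩ := S.pointwise hNorm hMatch a hMin
  obtain ⟨ε, hε, hb⟩ := Metric.eventually_nhds_iff_ball.1 hev
  refine ⟨min ε S.δ, lt_min hε S.δ_pos, min_le_right _ _, C, hC, ?_⟩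
  intro u Ω hsol hsmall i p hp
  have hs := hsmall p hp
  have hu : eunorm (u p.1 p.2) < S.δ := hsol.small p hp
  have hmem : u p.1 p.2 ∈ Metric.ball (0 : V n) ε := by
    simpa using lt_of_le_of_lt (norm_le_eunorm _) (hs.trans_le (min_le_left _ _))
  have key := hb _ hmem i (fun j => S.wC u j p.1 p.2)
  have hdu : HasDerivAt (fun y => u p.1 y) (deriv (fun y => u p.1 y) p.2) p.2 := by
    have h1 : DifferentiableAt ℝ (fun q : ℝ × ℝ => u q.1 q.2) (p.1, p.2) :=
      (hsol.smooth.contDiffAt (hsol.isOpen.mem_nhds hp)).differentiableAt (by simp)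
    have h2 : DifferentiableAt ℝ (fun y : ℝ => ((p.1, y) : ℝ × ℝ)) p.2 := by fun_prop
    exact (DifferentiableAt.comp (g := fun q : ℝ × ℝ => u q.1 q.2) p.2 h1 h2).hasDerivAt
  have hderiv : deriv (fun y => S.bcoef i (u p.1 y)) p.2 =
      ∑ j, S.wC u j p.1 p.2 * fderiv ℝ (S.bcoef i) (u p.1 p.2) (S.r j (u p.1 p.2)) := by
    have h1 := ((S.cd_b i _ hu).differentiableAt (by simp)).hasFDerivAt.comp_hasDerivAt p.2 hdu
    have h2 := h1.deriv
    simp only [Function.comp_def] at h2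
    rw [h2]
    conv_lhs => rw [S.expand _ hu (deriv (fun y => u p.1 y) p.2)]
    simp [map_sum, HypSys.wC]
  have hH : (∑ j : Fin n, ∑ k : Fin n,
            S.sigma i j k (u p.1 p.2) * S.wC u j p.1 p.2 * S.bcoef k (u p.1 p.2)) +
          deriv (fun y => S.bcoef i (u p.1 y)) p.2 =
        ∑ j, S.wC u j p.1 p.2 * S.HH i j (u p.1 p.2) := by
    rw [hderiv, ← Finset.sum_add_distrib]
    refine Finset.sum_congr rfl fun j _ => ?_
    rw [HypSys.HH, mul_add, Finset.mul_sum]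
    congr 1
    exact Finset.sum_congr rfl fun k _ => by ring
  rw [add_assoc, hH]
  exact key
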